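/- For every unicyclic graph G on n vertices that is not a cycle-path graph, there exists a cycle-path graph G′ on n vertices with H_A(G) > H_A(G′). -/

import Mathlib

open Finset SimpleGraph

/-- Degree of a vertex (number of neighbors). -/
noncomputable def deg {V : Type*} [Fintype V] (G : SimpleGraph V) (v : V) : ℕ :=
  Nat.card {w // G.Adj v w}

open scoped Classical in
/-- Additively weighted Harary index: sum over unordered pairs of distinct
vertices of (deg u + deg v) / d(u,v). -/
noncomputable def HA {V : Type*} [Fintype V] (G : SimpleGraph V) : ℝ :=
  (1/2) * ∑ u : V, ∑ v : V, if u = v then 0 else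
    ((deg G u + deg G v : ℕ) : ℝ) / (G.dist u v)

/-- A unicyclic graph: connected with as many edges as vertices. -/
def Unicyclic {V : Type*} [Fintype V] (G : SimpleGraph V) : Prop :=
  G.Connected ∧ Nat.card G.edgeSet = Fintype.card V

/-- k-th harmonicNum number. -/
noncomputable def harmonicNum (k : ℕ) : ℝ := ∑ i ∈ Finset.range k, (1 : ℝ) / (i + 1)

/-- CS_{3,n-3}: a triangle on vertices 0,1,2 with n-3 leaves attached to vertex 0. -/
def cycleStar3 (n : ℕ) : SimpleGraph (Fin n) :=
  SimpleGraph.fromRel (fun i j => ((i : ℕ) < 3 ∧ (j : ℕ) < 3) ∨ ((i : ℕ) = 0 ∧ 3 ≤ (j : ℕ)))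

/-- CP_{k,n-k}: cycle 0,...,k-1 with the path k,k+1,...,n-1 attached to vertex 0
(for k = n this is just the cycle C_n). -/
def cyclePath (n k : ℕ) : SimpleGraph (Fin n) :=
  SimpleGraph.fromRel (fun i j =>
    ((i : ℕ) < k ∧ (j : ℕ) < k ∧ ((j : ℕ) = (i : ℕ) + 1 ∨ ((i : ℕ) = 0 ∧ (j : ℕ) = k - 1)))
    ∨ ((i : ℕ) = 0 ∧ (j : ℕ) = k)
    ∨ (k ≤ (i : ℕ) ∧ (j : ℕ) = (i : ℕ) + 1))

/-- A vertex lies on a cycle of G. -/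
def OnCycle {V : Type*} (G : SimpleGraph V) (v : V) : Prop :=
  ∃ p : G.Walk v v, p.IsCycle

/-- Cycle-star graph: unicyclic, and every vertex of degree ≥ 2 lies on the cycle
(equivalently, every non-cycle vertex is a leaf attached to a cycle vertex). -/
def IsCycleStar {V : Type*} [Fintype V] (G : SimpleGraph V) : Prop :=
  Unicyclic G ∧ ∀ v, 2 ≤ deg G v → OnCycle G v

/-- Cycle-path graph: unicyclic, cycle vertices have degree ≤ 3 and non-cycle
vertices have degree ≤ 2 (at most one pendant path per cycle vertex). -/
def IsCyclePath {V : Type*} [Fintype V] (G : SimpleGraph V) : Prop :=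
  Unicyclic G ∧ ∀ v, (OnCycle G v → deg G v ≤ 3) ∧ (¬ OnCycle G v → deg G v ≤ 2)

/-- Length of the unique cycle of a unicyclic graph: number of vertices on a cycle. -/
noncomputable def cycleLength {V : Type*} [Fintype V] (G : SimpleGraph V) : ℕ :=
  Nat.card {v // OnCycle G v}

/-- Value of H_A(CP_{3,n-3}). -/
noncomputable def CPval (n : ℕ) : ℝ :=
  4 * ∑ i ∈ Finset.range (n - 2), harmonicNum (n - i - 2)
    + harmonicNum (n - 3) + 3 * harmonicNum (n - 2) + (6 * (n : ℝ) - 13) / ((n : ℝ) - 2)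

/-!
Choose a unicyclic graph on the given vertex set with the smallest value of `HA`; it is enough to
see that it has at most one leaf, because a unicyclic graph with at most one leaf is a cycle with at
most one pendant path. Suppose that two leaves hang at `v` and `w` on a unicyclic graph `F`, where a
leaf attached to `F` at `v` costs at most as much as one attached at `w`. Moving the leaf at `w` to
the end of the leaf at `v` then lowers `HA`. Indeed, one gives up the cost at `w`, which is at least
the cost at `v`, and the mutual interaction `2 / (d + 1) + 2 / (d + 2)` of the two leaves, where `d`
is the distance from `v` to `w`. At the new place every vertex of `F` is one step further away than
it is from `v`. The savings along a geodesic from `v` to `w` telescope and together with the old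
interaction balance the new interaction `5 / 2` of the two leaves. Strictness comes from a vertex
off the geodesic, which exists because two vertices have the same distance from `v`: otherwise each
edge would be determined by its end farther from `v`, leaving fewer edges than vertices.
-/

section Degree

variable {V W : Type*} [Fintype V] [Fintype W] {G : SimpleGraph V} {G' : SimpleGraph W}

lemma deg_eq_degree (G : SimpleGraph V) [DecidableRel G.Adj] (v : V) : deg G v = G.degree v := by
  rw [deg, Nat.card_eq_fintype_card]
  exact G.card_neighborSet_eq_degree v

lemma deg_eq_sum (G : SimpleGraph V) [DecidableRel G.Adj] (v : V) :
    deg G v = ∑ u, if G.Adj v u then 1 else 0 := by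
  rw [deg, Nat.card_eq_fintype_card, Fintype.card_subtype, card_filter]

lemma sum_deg_eq_two_mul_card_edgeSet (G : SimpleGraph V) :
    ∑ v, deg G v = 2 * Nat.card G.edgeSet := by
  classical
  simp only [deg_eq_degree, G.sum_degrees_eq_twice_card_edges, Nat.card_eq_fintype_card,
    edgeFinset_card]

lemma deg_pos_of_adj {u v : V} (h : G.Adj u v) : 0 < deg G u := by
  classical
  rw [deg_eq_degree, degree_pos_iff_exists_adj]
  exact ⟨v, h⟩

lemma two_le_deg_of_adj {u v w : V} (hv : G.Adj u v) (hw : G.Adj u w) (hvw : v ≠ w) :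
    2 ≤ deg G u := by
  classical
  rw [deg_eq_degree, ← card_neighborFinset_eq_degree]
  exact one_lt_card.2 ⟨v, by simpa, w, by simpa, hvw⟩

lemma deg_iso (e : G ≃g G') (v : V) : deg G' (e v) = deg G v :=
  (Nat.card_congr (e.mapNeighborSet v)).symm

lemma two_le_deg_getVert_add {u v : V} {p : G.Walk u v} (hp : p.IsPath) {k : ℕ}
    (hk : k ≤ p.length) :
    2 ≤ deg G (p.getVert k) + (if k = 0 then 1 else 0) + if k = p.length then 1 else 0 := by
  have hnext (i : ℕ) (hi : i < p.length) : G.Adj (p.getVert i) (p.getVert (i + 1)) :=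
    p.adj_getVert_succ hi
  rcases Nat.eq_zero_or_pos k with rfl | h0 <;> rcases hk.eq_or_lt with hl | hl
  · simp [← hl]
  · have := deg_pos_of_adj (hnext 0 hl)
    grind
  · have := deg_pos_of_adj (hnext (k - 1) (by lia)).symm
    grind
  · have hprev := (hnext (k - 1) (by lia)).symm
    rw [Nat.sub_add_cancel h0] at hprev
    have hne : p.getVert (k - 1) ≠ p.getVert (k + 1) := fun h => by
      have : k - 1 = k + 1 := hp.getVert_injOn (by grind) (by grind) h
      lia
    exact (two_le_deg_of_adj hprev (hnext k hl) hne).trans (by lia)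

end Degree

section Distance

variable {V W : Type*} {G : SimpleGraph V} {G' : SimpleGraph W}

lemma dist_hom_le (f : G →g G') {u v : V} (h : G.Reachable u v) :
    G'.dist (f u) (f v) ≤ G.dist u v := by
  obtain ⟨p, hp⟩ := h.exists_walk_length_eq_dist
  rw [← hp, ← Walk.length_map f]
  exact dist_le _

lemma dist_iso (e : G ≃g G') (hG : G.Connected) (u v : V) : G'.dist (e u) (e v) = G.dist u v :=
  (dist_hom_le e.toHom (hG u v)).antisymm <| by
    simpa using dist_hom_le e.symm.toHom ((e.connected_iff.1 hG) (e u) (e v))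

lemma dist_getVert_of_length_eq_dist {u v : V} {p : G.Walk u v} (hp : p.length = G.dist u v)
    {k : ℕ} (hk : k ≤ p.length) : G.dist u (p.getVert k) = k := by
  rw [← length_eq_dist_of_subwalk hp (p.isSubwalk_take k), Walk.take_length, min_eq_left hk]

lemma exists_notMem_support_of_length_eq_dist {u v : V} {p : G.Walk u v}
    (hp : p.length = G.dist u v) (h : ¬ Function.Injective (G.dist u)) : ∃ z, z ∉ p.support := by
  by_contra! hall
  refine h fun x y hxy => ?_
  obtain ⟨i, rfl, hi⟩ := Walk.mem_support_iff_exists_getVert.1 (hall x)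
  obtain ⟨j, rfl, hj⟩ := Walk.mem_support_iff_exists_getVert.1 (hall y)
  rw [dist_getVert_of_length_eq_dist hp hi, dist_getVert_of_length_eq_dist hp hj] at hxy
  rw [hxy]

lemma sum_support_of_isPath [DecidableEq V] {M : Type*} [AddCommMonoid M] {u v : V}
    {p : G.Walk u v} (hp : p.IsPath) (f : V → M) :
    ∑ x ∈ p.support.toFinset, f x = ∑ k ∈ range (p.length + 1), f (p.getVert k) := by
  have himage : p.support.toFinset = (range (p.length + 1)).image p.getVert := by
    ext x
    simp [Walk.mem_support_iff_exists_getVert, and_comm]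
  rw [himage, sum_image]
  exact hp.getVert_injOn.mono fun k hk => by simpa [Nat.lt_succ_iff] using hk

lemma card_edgeSet_lt_of_injective_dist [Fintype V] {v : V}
    (h : Function.Injective (G.dist v)) : Nat.card G.edgeSet < Fintype.card V := by
  classical
  have : Nonempty V := ⟨v⟩
  have hfar {a b : V} (hd : G.dist v b = G.dist v a + 1) :
      ∃ x ≠ v, s(x, Function.invFun (G.dist v) (G.dist v x - 1)) = s(a, b) :=
    ⟨b, by rintro rfl; simp at hd,
      by rw [hd, Nat.add_sub_cancel, Function.leftInverse_invFun h a, Sym2.eq_swap]⟩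
  have hsub : G.edgeFinset ⊆
      (univ.erase v).image fun x => s(x, Function.invFun (G.dist v) (G.dist v x - 1)) := by
    intro e he
    induction e with | _ a b
    have hab : G.Adj a b := by simpa using he
    have hne := h.ne hab.ne
    simp only [mem_image, mem_erase, mem_univ, and_true]
    rcases hab.diff_dist_adj (u := v) with hd | hd | hd
    · exact absurd hd.symm hne
    · exact hfar hd
    · rw [Sym2.eq_swap]
      exact hfar (by lia)
  calc Nat.card G.edgeSet = #G.edgeFinset := by
        rw [Nat.card_eq_fintype_card, edgeFinset_card]
    _ ≤ #(univ.erase v) := (card_le_card hsub).trans card_image_le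
    _ < Fintype.card V := card_erase_lt_of_mem (mem_univ v)

end Distance

section AttachLeaf

variable {V W : Type*}

/-- The graph `H` with a pendant vertex added at `w`; the new vertex is `none`. -/
def attachLeaf (H : SimpleGraph V) (w : V) : SimpleGraph (Option V) where
  Adj
    | some x, some y => H.Adj x y
    | some x, none => x = w
    | none, some x => x = w
    | none, none => False
  symm := ⟨by rintro (_ | x) (_ | y) h <;> first | exact h | exact H.adj_symm h⟩
  loopless := ⟨by rintro (_ | x) h <;> first | exact h | exact H.loopless.irrefl x h⟩

variable {H : SimpleGraph V} {H' : SimpleGraph W} {w x y : V}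

@[simp] lemma attachLeaf_adj_some_some : (attachLeaf H w).Adj (some x) (some y) ↔ H.Adj x y :=
  Iff.rfl

@[simp] lemma attachLeaf_adj_some_none : (attachLeaf H w).Adj (some x) none ↔ x = w := Iff.rfl

@[simp] lemma attachLeaf_adj_none_some : (attachLeaf H w).Adj none (some x) ↔ x = w := Iff.rfl

/-- The inclusion of `H` into `attachLeaf H w`. -/
def attachLeafSome (H : SimpleGraph V) (w : V) : H →g attachLeaf H w := ⟨some, id⟩

/-- Pendant vertices attached at corresponding vertices extend an isomorphism. -/
def attachLeafCongr (e : H ≃g H') (w : V) : attachLeaf H w ≃g attachLeaf H' (e w) where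
  toEquiv := e.toEquiv.optionCongr
  map_rel_iff' := by
    rintro (_ | x) (_ | y)
    · rfl
    · exact e.injective.eq_iff
    · exact e.injective.eq_iff
    · exact e.map_adj_iff

lemma exists_walk_length_le_of_attachLeaf {a b : Option V} (p : (attachLeaf H w).Walk a b) :
    ∃ q : H.Walk (a.getD w) (b.getD w), q.length ≤ p.length := by
  induction p with
  | nil => exact ⟨.nil, le_rfl⟩
  | @cons a b c h p ih =>
    obtain ⟨q, hq⟩ := ih
    match a, b, h with
    | some x, some y, h => exact ⟨.cons h q, Nat.succ_le_succ hq⟩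
    | some _, none, rfl => exact ⟨q, hq.trans (Nat.le_succ _)⟩
    | none, some _, rfl => exact ⟨q, hq.trans (Nat.le_succ _)⟩

lemma connected_attachLeaf_iff : (attachLeaf H w).Connected ↔ H.Connected := by
  refine ⟨fun h => ?_, fun h => ?_⟩
  · have : Nonempty V := ⟨w⟩
    refine ⟨fun x y => ?_⟩
    obtain ⟨p⟩ := h (some x) (some y)
    exact (exists_walk_length_le_of_attachLeaf p).nonempty
  · rw [connected_iff_exists_forall_reachable]
    refine ⟨some w, ?_⟩
    rintro (_ | x)
    · exact Adj.reachable rfl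
    · exact (h w x).map (attachLeafSome H w)

lemma dist_attachLeaf_some_some (hH : H.Connected) :
    (attachLeaf H w).dist (some x) (some y) = H.dist x y := by
  refine (dist_hom_le (attachLeafSome H w) (hH x y)).antisymm ?_
  obtain ⟨p, hp⟩ :=
    (connected_attachLeaf_iff.2 hH).exists_walk_length_eq_dist (some x) (some y)
  obtain ⟨q, hq⟩ := exists_walk_length_le_of_attachLeaf p
  exact (dist_le q).trans (hq.trans_eq hp)

lemma dist_attachLeaf_none_some (hH : H.Connected) :
    (attachLeaf H w).dist none (some x) = H.dist w x + 1 := by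
  have hG := connected_attachLeaf_iff (w := w).2 hH
  refine le_antisymm ?_ ?_
  · obtain ⟨p, hp⟩ := hG.exists_walk_length_eq_dist (some w) (some x)
    rw [dist_attachLeaf_some_some hH] at hp
    rw [← hp]
    exact dist_le (.cons (attachLeaf_adj_none_some.2 rfl) p)
  · obtain ⟨p, hp⟩ := hG.exists_walk_length_eq_dist none (some x)
    rw [← hp]
    match p with
    | .cons (v := some _) rfl p =>
      obtain ⟨q, hq⟩ := exists_walk_length_le_of_attachLeaf p
      exact Nat.succ_le_succ ((dist_le q).trans hq)

variable [Fintype V]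

@[simp] lemma deg_attachLeaf_none : deg (attachLeaf H w) none = 1 := by
  classical
  rw [deg_eq_sum, Fintype.sum_option]
  simp

lemma deg_attachLeaf_some [DecidableEq V] :
    deg (attachLeaf H w) (some x) = deg H x + if x = w then 1 else 0 := by
  classical
  rw [deg_eq_sum, deg_eq_sum, Fintype.sum_option, add_comm]
  simp

lemma card_edgeSet_attachLeaf {V : Type*} [Finite V] (H : SimpleGraph V) (w : V) :
    Nat.card (attachLeaf H w).edgeSet = Nat.card H.edgeSet + 1 := by
  classical
  have := Fintype.ofFinite V
  have h := sum_deg_eq_two_mul_card_edgeSet (attachLeaf H w)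
  rw [Fintype.sum_option] at h
  simp only [deg_attachLeaf_none, deg_attachLeaf_some, sum_add_distrib,
    sum_deg_eq_two_mul_card_edgeSet H, sum_ite_eq', mem_univ, if_true] at h
  lia

lemma unicyclic_attachLeaf_iff : Unicyclic (attachLeaf H w) ↔ Unicyclic H := by
  rw [Unicyclic, Unicyclic, connected_attachLeaf_iff, card_edgeSet_attachLeaf, Fintype.card_option,
    Nat.add_right_cancel_iff]

end AttachLeaf

universe u

lemma exists_iso_attachLeaf {V : Type u} [Fintype V] {G : SimpleGraph V} {ℓ : V}
    (h : deg G ℓ = 1) :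
    ∃ (U : Type u) (_ : Fintype U) (H : SimpleGraph U) (w : U) (e : attachLeaf H w ≃g G),
      e none = ℓ := by
  classical
  obtain ⟨⟨w, hw⟩, hunique⟩ : ∃ w : {w // G.Adj ℓ w}, ∀ v, v = w :=
    Nat.card_eq_one_iff_exists.1 h
  have hadj (x : V) : G.Adj ℓ x ↔ x = w :=
    ⟨fun hx => congrArg Subtype.val (hunique ⟨x, hx⟩), fun hx => hx ▸ hw⟩
  refine ⟨{x // x ≠ ℓ}, inferInstance, G.comap Subtype.val, ⟨w, hw.ne'⟩,
    ⟨Equiv.optionSubtypeNe ℓ, ?_⟩, rfl⟩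
  rintro (_ | x) (_ | y)
  · simp [attachLeaf]
  · simp [hadj, Subtype.ext_iff]
  · simp [G.adj_comm _ ℓ, hadj, Subtype.ext_iff]
  · simp

section HararyIndex

variable {V W : Type*} [Fintype V] [Fintype W]

/-- The terms with `u = v` vanish because `x / 0 = 0`. -/
lemma HA_eq_sum (G : SimpleGraph V) : HA G = ∑ u, ∑ v, (deg G u : ℝ) / G.dist u v := by
  classical
  have hterm (u v : V) : (if u = v then 0 else ((deg G u + deg G v : ℕ) : ℝ) / G.dist u v) =
      deg G u / G.dist u v + deg G v / G.dist v u := by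
    split_ifs with huv
    · simp [huv]
    · rw [Nat.cast_add, add_div, G.dist_comm (u := v)]
  have hswap : ∑ u, ∑ v, (deg G v : ℝ) / G.dist v u = ∑ u, ∑ v, (deg G u : ℝ) / G.dist u v :=
    sum_comm
  unfold HA
  simp only [hterm, sum_add_distrib, hswap]
  ring

lemma HA_congr {G : SimpleGraph V} {G' : SimpleGraph W} (e : G ≃g G') (hG : G.Connected) :
    HA G' = HA G := by
  rw [HA_eq_sum, HA_eq_sum, ← e.toEquiv.sum_comp]
  refine sum_congr rfl fun u _ => ?_
  rw [← e.toEquiv.sum_comp]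
  refine sum_congr rfl fun v _ => ?_
  simp only [RelIso.coe_fn_toEquiv, deg_iso, dist_iso e hG]

/-- The contribution of a vertex of degree `m` at distance `k` from `w` to the increase of `HA` when
a leaf is attached at `w`. At `k = 0` the junk value `1 / 0 = 0` is the intended one. -/
noncomputable def leafWeight (m : ℝ) (k : ℕ) : ℝ := (1 + m) / (k + 1) + 1 / k

/-- The increase of `HA` when a leaf is attached to `F` at `w`, see `HA_attachLeaf`. -/
noncomputable def leafCost (F : SimpleGraph V) (w : V) : ℝ :=
  1 + ∑ x, leafWeight (deg F x) (F.dist w x)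

variable {F : SimpleGraph V} {v w : V}

lemma HA_attachLeaf (hF : F.Connected) : HA (attachLeaf F w) = HA F + leafCost F w := by
  classical
  simp only [HA_eq_sum, leafCost, leafWeight]
  simp only [Fintype.sum_option, dist_self, (attachLeaf F w).dist_comm (v := none),
    dist_attachLeaf_none_some hF, dist_attachLeaf_some_some hF, deg_attachLeaf_none,
    deg_attachLeaf_some, Nat.cast_add, Nat.cast_ite, Nat.cast_one, Nat.cast_zero, add_div, ite_div,
    zero_div, sum_add_distrib, sum_ite_eq', sum_ite_irrel, sum_const_zero, mem_univ, if_true,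
    div_zero, zero_add, div_one]
  ring

lemma leafWeight_add_one (m : ℝ) (k : ℕ) :
    leafWeight (m + 1) k = leafWeight m k + 1 / (k + 1) := by
  simp only [leafWeight]
  ring

lemma sum_leafWeight_deg_attachLeaf (f : V → ℕ) :
    ∑ x, leafWeight (deg (attachLeaf F w) (some x)) (f x) =
      ∑ x, leafWeight (deg F x) (f x) + 1 / (f w + 1) := by
  classical
  have hterm (x : V) : leafWeight (deg (attachLeaf F w) (some x)) (f x) =
      leafWeight (deg F x) (f x) + if x = w then 1 / (f x + 1 : ℝ) else 0 := by
    rw [deg_attachLeaf_some]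
    split_ifs <;> simp [leafWeight_add_one]
  simp only [hterm, sum_add_distrib, sum_ite_eq', mem_univ, if_true]

lemma leafCost_attachLeaf_some (hF : F.Connected) :
    leafCost (attachLeaf F v) (some w) =
      leafCost F w + 2 / (F.dist v w + 1) + 2 / (F.dist v w + 2) := by
  simp only [leafCost, Fintype.sum_option, dist_attachLeaf_some_some hF,
    (attachLeaf F v).dist_comm (v := none), dist_attachLeaf_none_some hF,
    sum_leafWeight_deg_attachLeaf, deg_attachLeaf_none, F.dist_comm (u := w) (v := v)]
  simp only [leafWeight, Nat.cast_add, Nat.cast_one]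
  ring

lemma leafCost_attachLeaf_none (hF : F.Connected) :
    leafCost (attachLeaf F v) none = 7 / 2 + ∑ x, leafWeight (deg F x) (F.dist v x + 1) := by
  simp only [leafCost, Fintype.sum_option, dist_attachLeaf_none_some hF,
    sum_leafWeight_deg_attachLeaf, deg_attachLeaf_none, dist_self]
  simp only [leafWeight]
  push_cast
  ring

lemma leafWeight_succ_lt {m : ℝ} (hm : 0 ≤ m) {k : ℕ} (hk : k ≠ 0) :
    leafWeight m (k + 1) < leafWeight m k := by
  have : (0 : ℝ) < k := by positivity
  unfold leafWeight
  push_cast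
  gcongr <;> linarith

lemma leafWeight_sub_leafWeight_succ_ge {m a : ℝ} {k : ℕ} (h : 2 ≤ m + a) :
    leafWeight 2 k - leafWeight 2 (k + 1) - a * (1 / (k + 1) - 1 / (k + 2)) ≤
      leafWeight m k - leafWeight m (k + 1) := by
  have hpos : (0 : ℝ) ≤ 1 / (k + 1) - 1 / (k + 2) :=
    sub_nonneg.2 (one_div_le_one_div_of_le (by positivity) (by linarith))
  have hid : leafWeight m k - leafWeight m (k + 1) =
      leafWeight 2 k - leafWeight 2 (k + 1) + (m - 2) * (1 / (k + 1) - 1 / (k + 2)) := by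
    simp only [leafWeight]
    push_cast
    ring
  have hdeg := mul_le_mul_of_nonneg_right (show -a ≤ m - 2 by linarith) hpos
  linarith

lemma sum_support_leafWeight_sub_ge [DecidableEq V] {p : F.Walk v w}
    (hp : p.length = F.dist v w) :
    5 / 2 - 2 / (F.dist v w + 1 : ℝ) - 2 / (F.dist v w + 2) ≤
      ∑ x ∈ p.support.toFinset,
        (leafWeight (deg F x) (F.dist v x) - leafWeight (deg F x) (F.dist v x + 1)) := by
  have hpath := p.isPath_of_length_eq_dist hp
  rw [sum_support_of_isPath hpath, ← hp]
  calc 5 / 2 - 2 / (p.length + 1 : ℝ) - 2 / (p.length + 2)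
      = ∑ k ∈ range (p.length + 1), (leafWeight 2 k - leafWeight 2 (k + 1) -
          ((if k = 0 then 1 else 0) + if k = p.length then 1 else 0) *
            (1 / (k + 1) - 1 / (k + 2))) := by
        rw [sum_sub_distrib, sum_range_sub']
        simp only [add_mul, ite_mul, one_mul, zero_mul, sum_add_distrib, sum_ite_eq', mem_range,
          Nat.succ_pos, Nat.lt_succ_self, if_true]
        simp only [leafWeight]
        push_cast
        ring
    _ ≤ _ := sum_le_sum fun k hk => by
        have hk := Nat.lt_succ_iff.1 (mem_range.1 hk)
        rw [dist_getVert_of_length_eq_dist hp hk]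
        refine leafWeight_sub_leafWeight_succ_ge ?_
        rw [← add_assoc]
        exact_mod_cast two_le_deg_getVert_add hpath hk

lemma leafCost_attachLeaf_none_lt (hF : F.Connected) (h : ¬ Function.Injective (F.dist v)) :
    leafCost (attachLeaf F v) none <
      leafCost F v + 2 / (F.dist v w + 1) + 2 / (F.dist v w + 2) := by
  classical
  obtain ⟨p, hp⟩ := hF.exists_walk_length_eq_dist v w
  obtain ⟨z, hz⟩ := exists_notMem_support_of_length_eq_dist hp h
  let drop (x : V) : ℝ :=
    leafWeight (deg F x) (F.dist v x) - leafWeight (deg F x) (F.dist v x + 1)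
  have hdrop : ∀ x ∉ p.support, 0 < drop x := fun x hx =>
    sub_pos.2 <| leafWeight_succ_lt (Nat.cast_nonneg _) <| by
      rw [hF.dist_eq_zero_iff.ne]
      rintro rfl
      exact hx p.start_mem_support
  have hlt : 5 / 2 - 2 / (F.dist v w + 1 : ℝ) - 2 / (F.dist v w + 2) < ∑ x, drop x :=
    (sum_support_leafWeight_sub_ge hp).trans_lt <|
      sum_lt_sum_of_subset (subset_univ _) (mem_univ z) (by simpa) (hdrop z hz)
        fun x _ hx => (hdrop x (by simpa using hx)).le
  rw [leafCost_attachLeaf_none hF, leafCost]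
  simp only [drop, sum_sub_distrib] at hlt
  linarith

end HararyIndex

section Unicyclic

variable {V W : Type*} [Fintype V] [Fintype W] {G : SimpleGraph V} {G' : SimpleGraph W}

lemma unicyclic_congr (e : G ≃g G') : Unicyclic G ↔ Unicyclic G' := by
  rw [Unicyclic, Unicyclic, e.connected_iff, Nat.card_congr e.mapEdgeSet,
    Fintype.card_congr e.toEquiv]

lemma Unicyclic.not_injective_dist (hG : Unicyclic G) (v : V) :
    ¬ Function.Injective (G.dist v) :=
  fun h => (card_edgeSet_lt_of_injective_dist h).ne hG.2

lemma Unicyclic.deg_pos (hG : Unicyclic G) (v : V) : 0 < deg G v := by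
  classical
  have : Nonempty V := hG.1.nonempty
  obtain ⟨⟨⟨a, b⟩, hab : G.Adj a b⟩⟩ : Nonempty G.edgeSet :=
    (Nat.card_pos_iff.1 (hG.2 ▸ Fintype.card_pos)).1
  have : Nontrivial V := ⟨a, b, hab.ne⟩
  rw [deg_eq_degree]
  exact hG.1.preconnected.degree_pos_of_nontrivial v

lemma Unicyclic.exists_HA_lt_of_attachLeaf_attachLeaf {F : SimpleGraph V} (hF : Unicyclic F)
    (v w : V) : ∃ G : SimpleGraph (Option (Option V)), Unicyclic G ∧
      HA G < HA (attachLeaf (attachLeaf F v) (some w)) := by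
  have hconn (x : V) : (attachLeaf F x).Connected := connected_attachLeaf_iff.2 hF.1
  have hHA : HA (attachLeaf (attachLeaf F v) (some w)) =
      HA F + leafCost F v + leafCost F w + 2 / (F.dist v w + 1) + 2 / (F.dist v w + 2) := by
    rw [HA_attachLeaf (hconn v), HA_attachLeaf hF.1, leafCost_attachLeaf_some hF.1]
    ring
  have hmove (x : V) : Unicyclic (attachLeaf (attachLeaf F x) none) :=
    unicyclic_attachLeaf_iff.2 (unicyclic_attachLeaf_iff.2 hF)
  have hHAmove (x : V) : HA (attachLeaf (attachLeaf F x) none) =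
      HA F + leafCost F x + leafCost (attachLeaf F x) none := by
    rw [HA_attachLeaf (hconn x), HA_attachLeaf hF.1]
  rcases le_total (leafCost F v) (leafCost F w) with h | h
  · have := leafCost_attachLeaf_none_lt (w := w) hF.1 (hF.not_injective_dist v)
    exact ⟨_, hmove v, by linarith [hHAmove v]⟩
  · have := leafCost_attachLeaf_none_lt (w := v) hF.1 (hF.not_injective_dist w)
    rw [F.dist_comm] at this
    exact ⟨_, hmove w, by linarith [hHAmove w]⟩

lemma Unicyclic.exists_HA_lt_of_two_leaves (hG : Unicyclic G) {ℓ ℓ' : V} (hne : ℓ ≠ ℓ')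
    (hℓ : deg G ℓ = 1) (hℓ' : deg G ℓ' = 1) :
    ∃ G' : SimpleGraph V, Unicyclic G' ∧ HA G' < HA G := by
  classical
  obtain ⟨U, _, H, w, e, rfl⟩ := exists_iso_attachLeaf hℓ
  have hH : Unicyclic H := unicyclic_attachLeaf_iff.1 ((unicyclic_congr e).2 hG)
  obtain ⟨x, rfl⟩ : ∃ x, e (some x) = ℓ' := by
    obtain ⟨_ | x, rfl⟩ := e.surjective ℓ'
    exacts [absurd rfl hne, ⟨x, rfl⟩]
  have hx := hH.deg_pos x
  rw [deg_iso, deg_attachLeaf_some] at hℓ'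
  obtain ⟨hxw, hHx⟩ : x ≠ w ∧ deg H x = 1 := by grind
  obtain ⟨T, _, F, v, e', rfl⟩ := exists_iso_attachLeaf hHx
  obtain ⟨u, rfl⟩ : ∃ u, e' (some u) = w := by
    obtain ⟨_ | u, rfl⟩ := e'.surjective w
    exacts [absurd rfl hxw, ⟨u, rfl⟩]
  let f : attachLeaf (attachLeaf F v) (some u) ≃g G := (attachLeafCongr e' (some u)).trans e
  have hF : Unicyclic F := unicyclic_attachLeaf_iff.1 ((unicyclic_congr e').2 hH)
  obtain ⟨K, hK, hlt⟩ := hF.exists_HA_lt_of_attachLeaf_attachLeaf v u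
  have g := Iso.map f.toEquiv K
  refine ⟨_, (unicyclic_congr g).1 hK, ?_⟩
  rwa [HA_congr g hK.1, HA_congr f ((unicyclic_congr f).2 hG).1]

end Unicyclic

section CyclePath

variable {V W : Type*} {G : SimpleGraph V} {G' : SimpleGraph W}

lemma OnCycle.map {f : G →g G'} (hf : Function.Injective f) {v : V} (h : OnCycle G v) :
    OnCycle G' (f v) := by
  obtain ⟨p, hp⟩ := h
  exact ⟨p.map f, hp.map hf⟩

variable [Fintype V] [Fintype W]

lemma IsCyclePath.congr (e : G ≃g G') (h : IsCyclePath G) : IsCyclePath G' := by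
  refine ⟨(unicyclic_congr e).1 h.1, fun v' => ?_⟩
  obtain ⟨v, rfl⟩ := e.surjective v'
  have hcycle : OnCycle G v ↔ OnCycle G' (e v) :=
    ⟨OnCycle.map (f := e.toHom) e.injective, fun h => by
      simpa using OnCycle.map (f := e.symm.toHom) e.symm.injective h⟩
  rw [← hcycle, deg_iso]
  exact h.2 v

lemma Unicyclic.deg_eq_two_of_no_leaf (hG : Unicyclic G) (h : ∀ v, deg G v ≠ 1) (v : V) :
    deg G v = 2 := by
  have hle : ∀ v ∈ univ, 2 ≤ deg G v := fun v _ => by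
    have := hG.deg_pos v
    have := h v
    lia
  have hsum : ∑ _v : V, 2 = ∑ v, deg G v := by
    rw [sum_deg_eq_two_mul_card_edgeSet, hG.2, sum_const, card_univ, smul_eq_mul, mul_comm]
  exact ((sum_eq_sum_iff_of_le hle).1 hsum v (mem_univ v)).symm

lemma onCycle_of_forall_deg_eq_two (h : ∀ v, deg G v = 2) (v : V) : OnCycle G v := by
  have hncard (u : V) : (G.neighborSet u).ncard = 2 := h u
  have hcycles : G.IsCycles := fun u _ => hncard u
  have hnonempty : (G.neighborSet v).Nonempty :=
    Set.nonempty_of_ncard_ne_zero (by simp [hncard])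
  obtain ⟨p, hp, -⟩ := hcycles.exists_cycle_toSubgraph_verts_eq_connectedComponentSupp
    (c := G.connectedComponentMk v) rfl hnonempty
  exact ⟨p, hp⟩

lemma Unicyclic.isCyclePath_of_no_leaf (hG : Unicyclic G) (h : ∀ v, deg G v ≠ 1) :
    IsCyclePath G := by
  have hdeg := hG.deg_eq_two_of_no_leaf h
  exact ⟨hG, fun v => by simp [hdeg]⟩

lemma isCyclePath_attachLeaf {w : V} (hG : IsCyclePath G)
    (hw : deg G w < 2 ∨ deg G w = 2 ∧ OnCycle G w) : IsCyclePath (attachLeaf G w) := by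
  classical
  refine ⟨unicyclic_attachLeaf_iff.2 hG.1, ?_⟩
  have hcycle {x : V} : OnCycle G x → OnCycle (attachLeaf G w) (some x) :=
    OnCycle.map (f := attachLeafSome G w) (Option.some_injective V)
  rintro (_ | x)
  · simp
  · have := hG.2 x
    rw [deg_attachLeaf_some]
    by_cases hx : OnCycle G x <;> grind

end CyclePath

lemma Unicyclic.isCyclePath_of_leaf_unique {V : Type*} [Fintype V] {G : SimpleGraph V}
    (hG : Unicyclic G) (h : ∀ u v, deg G u = 1 → deg G v = 1 → u = v) : IsCyclePath G := by
  classical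
  induction hn : Fintype.card V generalizing V with
  | zero => exact absurd (Fintype.card_eq_zero_iff.1 hn) (not_isEmpty_iff.2 hG.1.nonempty)
  | succ n ih =>
    by_cases hleaf : ∀ v, deg G v ≠ 1
    · exact hG.isCyclePath_of_no_leaf hleaf
    push Not at hleaf
    obtain ⟨ℓ, hℓ⟩ := hleaf
    obtain ⟨U, _, H, w, e, rfl⟩ := exists_iso_attachLeaf hℓ
    have hH : Unicyclic H := unicyclic_attachLeaf_iff.1 ((unicyclic_congr e).2 hG)
    have honly (x : U) (hx : deg H x = 1) : x = w := by
      by_contra hxw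
      have hleaf : deg G (e (some x)) = 1 := by
        rw [deg_iso, deg_attachLeaf_some, hx, if_neg hxw]
      simpa using e.injective (h _ _ hleaf hℓ)
    have hcard : Fintype.card U = n := by
      simpa [hn] using Fintype.card_congr e.toEquiv
    have hHpath : IsCyclePath H :=
      ih hH (fun u v hu hv => (honly u hu).trans (honly v hv).symm) hcard
    refine (isCyclePath_attachLeaf hHpath ?_).congr e
    by_cases hw : deg H w = 1
    · exact .inl (by lia)
    · have hdeg := hH.deg_eq_two_of_no_leaf fun x hx => hw (honly x hx ▸ hx)
      exact .inr ⟨hdeg w, onCycle_of_forall_deg_eq_two hdeg w⟩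

theorem isCyclePath_of_forall_HA_le {V : Type*} [Fintype V] {G : SimpleGraph V}
    (hG : Unicyclic G) (hmin : ∀ G' : SimpleGraph V, Unicyclic G' → HA G ≤ HA G') :
    IsCyclePath G := by
  refine hG.isCyclePath_of_leaf_unique fun u v hu hv => ?_
  by_contra huv
  obtain ⟨G', hG', hlt⟩ := hG.exists_HA_lt_of_two_leaves huv hu hv
  exact hlt.not_ge (hmin G' hG')

theorem stmt15_general {V : Type*} [Fintype V] (G : SimpleGraph V) (hG : Unicyclic G)
    (h : ¬ IsCyclePath G) : ∃ G' : SimpleGraph V, IsCyclePath G' ∧ HA G > HA G' := by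
  have : Nonempty {K : SimpleGraph V // Unicyclic K} := ⟨⟨G, hG⟩⟩
  obtain ⟨⟨G', hG'⟩, hmin⟩ :=
    Finite.exists_min fun K : {K : SimpleGraph V // Unicyclic K} => HA K.1
  have hpath : IsCyclePath G' := isCyclePath_of_forall_HA_le hG' fun K hK => hmin ⟨K, hK⟩
  refine ⟨G', hpath, (hmin ⟨G, hG⟩).lt_of_ne fun heq => h ?_⟩
  exact isCyclePath_of_forall_HA_le hG fun K hK => heq ▸ hmin ⟨K, hK⟩

theorem stmt15 (n : ℕ) (G : SimpleGraph (Fin n)) (hG : Unicyclic G)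
    (h : ¬ IsCyclePath G) :
    ∃ G' : SimpleGraph (Fin n), IsCyclePath G' ∧ HA G > HA G' :=
  stmt15_general G hG h
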